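/- Let M be the 27 × 27 integer matrix obtained by stacking vertically the three Kronecker products r ⊗ I₃ ⊗ I₃, I₃ ⊗ r ⊗ I₃, and I₃ ⊗ I₃ ⊗ r, where I₃ is the 3 × 3 identity matrix and r = (1, 1, 1). Let x_p = (0,0,0,1,51,2,0,0,0,1,51,2,51,2654,102,0,106,2,0,0,0,0,106,2,2,0,0) ∈ ℤ²⁷. Then the set of vectors x ∈ ℤ²⁷ with all coordinates nonnegative satisfying M x = M x_p and x₂₇ = 0 has exactly 3 elements. -/

import Mathlib

/-!
View vectors in `ℤ²⁷` as `3 × 3 × 3` arrays, so that `M z = 0` says that `z` sums to zero along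
every axis-parallel line. Let `z = x - x_p` for a solution `x`. Since `x_p` vanishes on the lines
`(1, 1, *)`, `(1, 3, *)` and `(3, 1, *)`, nonnegativity of `x` makes `z` vanish there too; together
with `x₂₇ = 0` and the line sums this confines `z` to the box `{2, 3} × {2, 3} × {1, 2}`. On a
`2 × 2 × 2` box, zero line sums leave only the multiples `t • u ⊗ v ⊗ w` of one sign pattern, and
nonnegativity at the entries `x₂₂ = t` and `x₂₅ = 2 - t` gives `0 ≤ t ≤ 2`.
-/

open Matrix Kronecker

/-- The 1 × 3 all-ones row vector `r = (1, 1, 1)`. -/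
def rOnes : Matrix (Fin 1) (Fin 3) ℤ := Matrix.of fun _ _ => 1

/-- Lexicographic identification of index triples `(i₁, i₂, i₃)` with `Fin 27`
(first coordinate most significant), matching the lexicographic ordering of the triples
`(i₁, i₂, i₃) ∈ {1, 2, 3}³` used to index the 27 coordinates. -/
def colEquiv : (Fin 3 × Fin 3) × Fin 3 ≃ Fin 27 :=
  (Equiv.prodCongr finProdFinEquiv (Equiv.refl (Fin 3))).trans finProdFinEquiv

def rowEquiv1 : (Fin 1 × Fin 3) × Fin 3 ≃ Fin 9 :=
  (Equiv.prodCongr finProdFinEquiv (Equiv.refl (Fin 3))).trans finProdFinEquiv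

def rowEquiv2 : (Fin 3 × Fin 1) × Fin 3 ≃ Fin 9 :=
  (Equiv.prodCongr finProdFinEquiv (Equiv.refl (Fin 3))).trans finProdFinEquiv

def rowEquiv3 : (Fin 3 × Fin 3) × Fin 1 ≃ Fin 9 :=
  (Equiv.prodCongr finProdFinEquiv (Equiv.refl (Fin 1))).trans finProdFinEquiv

/-- The 27 × 27 matrix obtained by stacking vertically the three Kronecker products
`r ⊗ I₃ ⊗ I₃`, `I₃ ⊗ r ⊗ I₃` and `I₃ ⊗ I₃ ⊗ r`, where `I₃` is the 3 × 3 identity matrix and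
`r = (1, 1, 1)` is the 1 × 3 all-ones row, with columns indexed lexicographically by triples. -/
def M : Matrix (Fin 27) (Fin 27) ℤ :=
  Matrix.reindex
    ((rowEquiv1.sumCongr (rowEquiv2.sumCongr rowEquiv3)).trans
      (((Equiv.refl (Fin 9)).sumCongr finSumFinEquiv).trans finSumFinEquiv))
    colEquiv
    (Matrix.fromRows
      (rOnes ⊗ₖ (1 : Matrix (Fin 3) (Fin 3) ℤ) ⊗ₖ (1 : Matrix (Fin 3) (Fin 3) ℤ))
      (Matrix.fromRows
        ((1 : Matrix (Fin 3) (Fin 3) ℤ) ⊗ₖ rOnes ⊗ₖ (1 : Matrix (Fin 3) (Fin 3) ℤ))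
        ((1 : Matrix (Fin 3) (Fin 3) ℤ) ⊗ₖ (1 : Matrix (Fin 3) (Fin 3) ℤ) ⊗ₖ rOnes)))

/-- The particular solution of block 221 (coordinates indexed lexicographically by triples,
coordinate 27 corresponding to (3,3,3)). -/
def xp : Fin 27 → ℤ := ![0,0,0,1,51,2,0,0,0,1,51,2,51,2654,102,0,106,2,0,0,0,0,106,2,2,0,0]

section SignedPair

variable {ι R : Type*} [DecidableEq ι] [NonAssocRing R]

/-- The vector `e_a - e_a'`, spanning the zero-sum vectors supported on `{a, a'}`. -/
def signedPair (a a' : ι) : ι → R := Pi.single a 1 - Pi.single a' 1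

lemma sum_signedPair [Fintype ι] (a a' : ι) : ∑ i, (signedPair a a' i : R) = 0 := by
  simp [signedPair]

lemma signedPair_apply_left {a a' : ι} (h : a ≠ a') : (signedPair a a' a : R) = 1 := by
  simp [signedPair, h]

lemma signedPair_apply_right {a a' : ι} (h : a ≠ a') : (signedPair a a' a' : R) = -1 := by
  simp [signedPair, h.symm]

lemma eq_mul_signedPair_of_sum_eq_zero [Fintype ι] {f : ι → R} {a a' : ι} (haa' : a ≠ a')
    (hsum : ∑ i, f i = 0) (hoff : ∀ i, i ≠ a → i ≠ a' → f i = 0) (i : ι) :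
    f i = f a * signedPair a a' i := by
  have hneg : f a' = -f a := by
    rw [Fintype.sum_eq_add a a' haa' fun i hi => hoff i hi.1 hi.2] at hsum
    exact eq_neg_of_add_eq_zero_right hsum
  rcases eq_or_ne i a with rfl | ha
  · simp [signedPair_apply_left haa']
  rcases eq_or_ne i a' with rfl | ha'
  · simp [signedPair_apply_right haa', hneg]
  · simp [signedPair, ha, ha', hoff i ha ha']

end SignedPair

section LineSums

variable {ι κ μ R : Type*} [Fintype ι] [Fintype κ] [Fintype μ]

/-- The three-dimensional array `z` sums to zero along every axis-parallel line. -/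
structure HasZeroLineSums [AddCommMonoid R] (z : (ι × κ) × μ → R) : Prop where
  sum_fst : ∀ j k, ∑ i, z ((i, j), k) = 0
  sum_snd : ∀ i k, ∑ j, z ((i, j), k) = 0
  sum_trd : ∀ i j, ∑ k, z ((i, j), k) = 0

lemma HasZeroLineSums.smul {S : Type*} [AddCommMonoid R] [DistribSMul S R]
    {z : (ι × κ) × μ → R} (hz : HasZeroLineSums z) (t : S) : HasZeroLineSums (t • z) where
  sum_fst j k := by simp [← Finset.smul_sum, hz.sum_fst]
  sum_snd i k := by simp [← Finset.smul_sum, hz.sum_snd]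
  sum_trd i j := by simp [← Finset.smul_sum, hz.sum_trd]

lemma kronecker_kronecker_mulVec_apply {l m n : Type*} [NonUnitalNonAssocSemiring R]
    (A : Matrix l ι R) (B : Matrix m κ R) (C : Matrix n μ R) (z : (ι × κ) × μ → R)
    (i : l) (j : m) (k : n) :
    ((A ⊗ₖ B ⊗ₖ C) *ᵥ z) ((i, j), k) =
      ∑ i', ∑ j', ∑ k', A i i' * B j j' * C k k' * z ((i', j'), k') := by
  simp [Matrix.mulVec, dotProduct, Fintype.sum_prod_type]

variable [DecidableEq ι] [DecidableEq κ] [DecidableEq μ]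

/-- The array `(e_a - e_a') ⊗ (e_b - e_b') ⊗ (e_c - e_c')`: the alternating signs on the vertices of
the box `{a, a'} × {b, b'} × {c, c'}`, with `+1` at `(a, b, c)`. -/
def boxMove [NonAssocRing R] (a a' : ι) (b b' : κ) (c c' : μ) (p : (ι × κ) × μ) : R :=
  signedPair a a' p.1.1 * signedPair b b' p.1.2 * signedPair c c' p.2

lemma hasZeroLineSums_boxMove [NonAssocRing R] (a a' : ι) (b b' : κ) (c c' : μ) :
    HasZeroLineSums (boxMove a a' b b' c c' : (ι × κ) × μ → R) where
  sum_fst j k := by simp [boxMove, ← Finset.sum_mul, sum_signedPair]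
  sum_snd i k := by simp [boxMove, ← Finset.sum_mul, ← Finset.mul_sum, sum_signedPair]
  sum_trd i j := by simp [boxMove, ← Finset.mul_sum, sum_signedPair]

lemma HasZeroLineSums.eq_smul_boxMove [CommRing R] {z : (ι × κ) × μ → R} (hz : HasZeroLineSums z)
    {a a' : ι} {b b' : κ} {c c' : μ} (ha : a ≠ a') (hb : b ≠ b') (hc : c ≠ c')
    (hfst : ∀ i j k, i ≠ a → i ≠ a' → z ((i, j), k) = 0)
    (hsnd : ∀ i j k, j ≠ b → j ≠ b' → z ((i, j), k) = 0)
    (htrd : ∀ i j k, k ≠ c → k ≠ c' → z ((i, j), k) = 0) :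
    z = z ((a, b), c) • boxMove a a' b b' c c' := by
  ext ⟨⟨i, j⟩, k⟩
  calc z ((i, j), k)
      = z ((a, j), k) * signedPair a a' i :=
        eq_mul_signedPair_of_sum_eq_zero ha (hz.sum_fst j k) (hfst · j k) i
    _ = z ((a, b), k) * signedPair b b' j * signedPair a a' i := by
        rw [eq_mul_signedPair_of_sum_eq_zero hb (hz.sum_snd a k) (hsnd a · k) j]
    _ = z ((a, b), c) * signedPair c c' k * signedPair b b' j * signedPair a a' i := by
        rw [eq_mul_signedPair_of_sum_eq_zero hc (hz.sum_trd a b) (htrd a b ·) k]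
    _ = (z ((a, b), c) • boxMove a a' b b' c c') ((i, j), k) := by
        simp only [boxMove, Pi.smul_apply, smul_eq_mul]
        ring

end LineSums

lemma HasZeroLineSums.eq_smul_boxMove_of_nonneg {R : Type*} [CommRing R] [PartialOrder R]
    [IsOrderedAddMonoid R] {z : (Fin 3 × Fin 3) × Fin 3 → R} (hz : HasZeroLineSums z)
    (h₀₀ : ∀ k, 0 ≤ z ((0, 0), k)) (h₀₂ : ∀ k, 0 ≤ z ((0, 2), k)) (h₂₀ : ∀ k, 0 ≤ z ((2, 0), k))
    (hcorner : z ((2, 2), 2) = 0) :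
    z = z ((2, 1), 0) • boxMove 2 1 1 2 0 1 := by
  have line_eq_zero {i j} (h : ∀ k, 0 ≤ z ((i, j), k)) (k) : z ((i, j), k) = 0 :=
    congrFun ((Fintype.sum_eq_zero_iff_of_nonneg h).1 (hz.sum_trd i j)) k
  have line₀₀ := line_eq_zero h₀₀
  have line₀₂ := line_eq_zero h₀₂
  have line₂₀ := line_eq_zero h₂₀
  have layer₀ : ∀ j k, z ((0, j), k) = 0
    | 0, k => line₀₀ k
    | 1, k => by simpa [Fin.sum_univ_three, line₀₀ k, line₀₂ k] using hz.sum_snd 0 k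
    | 2, k => line₀₂ k
  have face₀ : ∀ i k, z ((i, 0), k) = 0
    | 0, k => line₀₀ k
    | 1, k => by simpa [Fin.sum_univ_three, line₀₀ k, line₂₀ k] using hz.sum_fst 0 k
    | 2, k => line₂₀ k
  have edge : ∀ j, z ((2, j), 2) = 0
    | 0 => line₂₀ 2
    | 1 => by simpa [Fin.sum_univ_three, line₂₀ 2, hcorner] using hz.sum_snd 2 2
    | 2 => hcorner
  have slice₂ : ∀ i j, z ((i, j), 2) = 0
    | 0, j => layer₀ j 2
    | 1, j => by simpa [Fin.sum_univ_three, layer₀ j 2, edge j] using hz.sum_fst j 2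
    | 2, j => edge j
  refine hz.eq_smul_boxMove (by decide) (by decide) (by decide) (fun i j k h2 h1 => ?_)
    (fun i j k h1 h2 => ?_) fun i j k h0 h1 => ?_
  · obtain rfl : i = 0 := by omega
    exact layer₀ j k
  · obtain rfl : j = 0 := by omega
    exact face₀ i k
  · obtain rfl : k = 2 := by omega
    exact slice₂ i j

lemma M_mulVec_eq_zero_iff (x : Fin 27 → ℤ) :
    M *ᵥ x = 0 ↔ HasZeroLineSums (x ∘ colEquiv) := by
  rw [M, reindex_apply, submatrix_mulVec_equiv, Equiv.symm_symm, Equiv.comp_symm_eq,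
    fromRows_mulVec, fromRows_mulVec]
  simp only [funext_iff, Sum.forall, Prod.forall, Sum.elim_inl, Sum.elim_inr,
    kronecker_kronecker_mulVec_apply]
  simpa [rOnes, Matrix.one_apply] using
    ⟨fun ⟨hfst, hsnd, htrd⟩ => ⟨hfst, hsnd, htrd⟩, fun ⟨hfst, hsnd, htrd⟩ => ⟨hfst, hsnd, htrd⟩⟩

/-- The arrays obtained from `xp` by `t` moves on the box `{2, 3} × {2, 3} × {1, 2}`; in the
`0`-based indices of `Fin 3` this is `{1, 2} × {1, 2} × {0, 1}`. -/
def solution (t : ℤ) : Fin 27 → ℤ := xp + t • boxMove 2 1 1 2 0 1 ∘ colEquiv.symm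

lemma solution_apply_21 (t : ℤ) : solution t 21 = t :=
  calc solution t 21 = 0 + t * 1 := rfl
    _ = t := by ring

lemma solution_apply_24 (t : ℤ) : solution t 24 = 2 - t :=
  calc solution t 24 = 2 + t * -1 := rfl
    _ = 2 - t := by ring

lemma solution_apply_26 (t : ℤ) : solution t 26 = 0 :=
  calc solution t 26 = 0 + t * 0 := rfl
    _ = 0 := by ring

lemma solution_injective : Function.Injective solution := fun s t h => by
  simpa only [solution_apply_21] using congrFun h 21

lemma solution_nonneg_iff (t : ℤ) : (∀ i, 0 ≤ solution t i) ↔ t ∈ Set.Icc 0 2 := by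
  constructor
  · intro h
    have h₂₁ := h 21
    have h₂₄ := h 24
    rw [solution_apply_21] at h₂₁
    rw [solution_apply_24] at h₂₄
    exact ⟨h₂₁, by omega⟩
  · rintro ⟨h0, h2⟩
    interval_cases t <;> decide

lemma M_mulVec_solution (t : ℤ) : M *ᵥ solution t = M *ᵥ xp := by
  rw [← sub_eq_zero, ← mulVec_sub, solution, add_sub_cancel_left, M_mulVec_eq_zero_iff]
  simpa [Function.comp_def] using! (hasZeroLineSums_boxMove 2 1 1 2 0 1).smul t

lemma exists_eq_solution {x : Fin 27 → ℤ} (hnonneg : ∀ i, 0 ≤ x i) (hM : M *ᵥ x = M *ᵥ xp)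
    (hlast : x 26 = 0) : ∃ t, solution t = x := by
  have hsums : HasZeroLineSums ((x - xp) ∘ colEquiv) := by
    rw [← M_mulVec_eq_zero_iff, mulVec_sub, hM, sub_self]
  have nonneg_of_xp_eq_zero {i j} (h : ∀ k, xp (colEquiv ((i, j), k)) = 0) (k) :
      0 ≤ ((x - xp) ∘ colEquiv) ((i, j), k) := by
    simpa [h k] using hnonneg _
  have hdiff : (x - xp) ∘ colEquiv = (x - xp) 21 • boxMove 2 1 1 2 0 1 :=
    hsums.eq_smul_boxMove_of_nonneg (nonneg_of_xp_eq_zero (by decide))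
      (nonneg_of_xp_eq_zero (by decide)) (nonneg_of_xp_eq_zero (by decide)) (sub_eq_zero.2 hlast)
  have hx : x - xp = (x - xp) 21 • boxMove 2 1 1 2 0 1 ∘ colEquiv.symm :=
    (Equiv.eq_comp_symm ..).2 hdiff
  exact ⟨(x - xp) 21, (sub_eq_iff_eq_add'.1 hx).symm⟩

/-- The set of nonnegative integer vectors \`x\` with \`M x = M x_p\` and \`x₂₇ = 0\` (block 221) has exactly 3 elements. -/
theorem block221_solution_count :
    {x : Fin 27 → ℤ | (∀ i, 0 ≤ x i) ∧ M.mulVec x = M.mulVec xp ∧ x 26 = 0}.ncard = 3 := by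
  have hset : {x : Fin 27 → ℤ | (∀ i, 0 ≤ x i) ∧ M.mulVec x = M.mulVec xp ∧ x 26 = 0} =
      solution '' Set.Icc 0 2 := by
    ext x
    constructor
    · rintro ⟨hnonneg, hM, hlast⟩
      obtain ⟨t, rfl⟩ := exists_eq_solution hnonneg hM hlast
      exact ⟨t, (solution_nonneg_iff t).1 hnonneg, rfl⟩
    · rintro ⟨t, ht, rfl⟩
      exact ⟨(solution_nonneg_iff t).2 ht, M_mulVec_solution t, solution_apply_26 t⟩
  rw [hset, Set.ncard_image_of_injective _ solution_injective, ← Finset.coe_Icc,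
    Set.ncard_coe_finset, Int.card_Icc]
  rfl
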